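/- Let n ≥ 8 be even, and in the alternating group A_n on {1,…,n} let x₁ = (1,2)(3,4) and y₁ = (2,3,4,…,n). Then x₁ and y₁ generate A_n, and their product x₁y₁ = (1,3,5,6,…,n,2) is an (n−1)-cycle. -/

import Mathlib

/-!
Write `x₁ = (a b)(c d)` and `y₁ = (b c d e f g …)`, where `a, b, c, …` is the list of all points.
Since `y₁` is transitive on the points other than `a` and `x₁` moves `a`, the group they generate
is 2-transitive, hence primitive. Conjugating `x₁` by `y₁ ^ 3` gives `(a e)(f g)`, which meets `x₁`
in the single point `a`; so the product of the two is a 3-cycle times a disjoint involution, and its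
square is a 3-cycle. By Jordan's theorem the group contains the alternating group, and both
generators are even.
-/

section Transitivity

open Equiv.Perm MulAction

variable {α : Type*} {G : Subgroup (Equiv.Perm α)} {σ τ : Equiv.Perm α} {a : α}

lemma isMultiplyPretransitive_two_of_isCycle_mem (hσ : σ.IsCycle)
    (hfix : Function.fixedPoints σ = {a}) (hσG : σ ∈ G) (hτG : τ ∈ G) (hτ : τ a ≠ a) :
    IsMultiplyPretransitive G α 2 := by
  have hmove {x : α} (hx : x ≠ a) : σ x ≠ x := fun h ↦ hx (hfix.subset h)
  have ha : σ a = a := hfix.superset rfl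
  have : IsPretransitive G α := by
    refine (isPretransitive_iff_base a).mpr fun y ↦ ?_
    obtain rfl | hy := eq_or_ne y a
    · exact ⟨1, one_smul _ _⟩
    · obtain ⟨k, hk⟩ := hσ.sameCycle (hmove hτ) (hmove hy)
      exact ⟨⟨σ ^ k * τ, mul_mem (zpow_mem hσG k) hτG⟩, hk⟩
  rw [SubMulAction.ofStabilizer.isMultiplyPretransitive (a := a), is_one_pretransitive_iff]
  refine ⟨fun ⟨x, hx⟩ ⟨y, hy⟩ ↦ ?_⟩
  obtain ⟨k, hk⟩ := hσ.sameCycle (hmove hx) (hmove hy)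
  exact ⟨⟨⟨σ ^ k, zpow_mem hσG k⟩, zpow_apply_eq_self_of_apply_eq_self ha k⟩, Subtype.ext hk⟩

end Transitivity

section FormPerm

open List Equiv Equiv.Perm

variable {α : Type*} [DecidableEq α] {a b c d e f g : α} {l : List α}

lemma isThreeCycle_sq_swap_mul_swap_mul_swap_mul_swap [Fintype α]
    (h : [a, b, c, d, e, f, g].Nodup) :
    ((swap a b * swap c d * (swap a e * swap f g)) ^ 2).IsThreeCycle := by
  have hcomm : Commute (swap c d) (swap a e) := (disjoint_swap_swap (by grind)).commute
  have hcomm' : Commute (swap a b * swap a e) (swap c d * swap f g) :=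
    (((disjoint_swap_swap (by grind)).mul_left (disjoint_swap_swap (by grind))).mul_right
      ((disjoint_swap_swap (by grind)).mul_left (disjoint_swap_swap (by grind)))).commute
  have hinvol : (swap c d * swap f g) ^ 2 = 1 := by
    rw [(disjoint_swap_swap (by grind)).commute.mul_pow, pow_two, pow_two, swap_mul_self,
      swap_mul_self, one_mul]
  have hthree : (swap a b * swap a e).IsThreeCycle :=
    isThreeCycle_swap_mul_swap_same (by grind) (by grind) (by grind)
  rw [hcomm.mul_mul_mul_comm, hcomm'.mul_pow, hinvol, mul_one, pow_two]
  exact hthree.isThreeCycle_sq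

lemma fixedPoints_formPerm (hl : l.Nodup) (hlen : 2 ≤ l.length) :
    Function.fixedPoints l.formPerm = {x | x ∉ l} := by
  ext x
  exact ⟨fun hx hxl ↦ (formPerm_apply_mem_ne_self_iff l hl x hxl).mpr hlen hx,
    formPerm_apply_of_notMem⟩

lemma card_support_formPerm [Fintype α] (hl : l.Nodup) (hlen : 2 ≤ l.length) :
    l.formPerm.support.card = l.length := by
  rw [support_formPerm_of_nodup l hl (by rintro x rfl; simp at hlen), toFinset_card_of_nodup hl]

lemma sign_formPerm_cons [Fintype α] (h : (a :: l).Nodup) :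
    sign (formPerm (a :: l)) = (-1) ^ l.length := by
  induction l generalizing a with
  | nil => simp
  | cons b l ih =>
    rw [formPerm_cons_cons, Perm.sign_mul, sign_swap (by grind), ih h.of_cons, length_cons,
      pow_succ']

lemma formPerm_mul_swap_mul_swap (h : (a :: b :: c :: d :: l).Nodup) :
    formPerm (b :: c :: d :: l) * (swap a b * swap c d) = formPerm (a :: c :: l ++ [b]) := by
  have hcomm : Commute (swap a b) (swap c d) := (disjoint_swap_swap (by grind)).commute
  have hrot_b : b :: c :: d :: l ~r l ++ [b] ++ [c, d] := ⟨3, by simp⟩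
  have hrot_c : l ++ [b] ++ [c] ~r c :: l ++ [b] := .symm ⟨1, by simp⟩
  have hrot_a : c :: l ++ [b, a] ~r a :: c :: l ++ [b] := .symm ⟨1, by simp⟩
  calc formPerm (b :: c :: d :: l) * (swap a b * swap c d)
      = formPerm (l ++ [b] ++ [c, d]) * swap c d * swap a b := by
        rw [hcomm.eq, formPerm_eq_of_isRotated h.of_cons hrot_b, mul_assoc]
    _ = formPerm (l ++ [b] ++ [c]) * swap b a := by
        rw [formPerm_append_pair, mul_swap_mul_self, Equiv.swap_comm]
    _ = formPerm (c :: l ++ [b, a]) := by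
        rw [formPerm_eq_of_isRotated (by grind) hrot_c, formPerm_append_pair]
    _ = formPerm (a :: c :: l ++ [b]) := formPerm_eq_of_isRotated (by grind) hrot_a

lemma formPerm_pow_apply_getElem_of_lt (hl : l.Nodup) {i k : ℕ} (h : i + k < l.length) :
    (l.formPerm ^ k) l[i] = l[i + k] := by
  simp only [formPerm_pow_apply_getElem l hl, Nat.mod_eq_of_lt h]

lemma formPerm_pow_three_conj_swap_mul_swap (h : (a :: b :: c :: d :: e :: f :: g :: l).Nodup) :
    formPerm (b :: c :: d :: e :: f :: g :: l) ^ 3 * (swap a b * swap c d) *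
      (formPerm (b :: c :: d :: e :: f :: g :: l) ^ 3)⁻¹ = swap a e * swap f g := by
  set l' := b :: c :: d :: e :: f :: g :: l with hl'
  have ha : (formPerm l' ^ 3) a = a :=
    pow_apply_eq_self_of_apply_eq_self (formPerm_apply_of_notMem h.notMem) 3
  have hb : (formPerm l' ^ 3) b = e :=
    formPerm_pow_apply_getElem_of_lt h.of_cons (i := 0) (by simp [hl'])
  have hc : (formPerm l' ^ 3) c = f :=
    formPerm_pow_apply_getElem_of_lt h.of_cons (i := 1) (by simp [hl'])
  have hd : (formPerm l' ^ 3) d = g :=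
    formPerm_pow_apply_getElem_of_lt h.of_cons (i := 2) (by simp [hl'])
  rw [← conj_mul, ← swap_apply_apply, ← swap_apply_apply, ha, hb, hc, hd]

theorem alternatingGroup_le_closure_swap_mul_swap_formPerm [Fintype α]
    (h : (a :: b :: c :: d :: e :: f :: g :: l).Nodup)
    (hmem : ∀ x, x ∈ a :: b :: c :: d :: e :: f :: g :: l) :
    alternatingGroup α ≤ Subgroup.closure
      {swap a b * swap c d, formPerm (b :: c :: d :: e :: f :: g :: l)} := by
  set x := swap a b * swap c d with hx
  set y := formPerm (b :: c :: d :: e :: f :: g :: l)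
  have hxG : x ∈ Subgroup.closure {x, y} := Subgroup.subset_closure (Set.mem_insert x _)
  have hyG : y ∈ Subgroup.closure {x, y} := Subgroup.subset_closure (Set.mem_insert_of_mem x rfl)
  have hfix : Function.fixedPoints y = {a} := by
    rw [fixedPoints_formPerm h.of_cons (by simp)]
    grind
  have hxa : x a ≠ a := by
    rw [hx, Perm.mul_apply, swap_apply_of_ne_of_ne (a := c) (by grind) (by grind), swap_apply_left]
    exact (ne_of_not_mem_cons h.notMem).symm
  have hprim : MulAction.IsPreprimitive (Subgroup.closure {x, y}) α :=
    MulAction.isPreprimitive_of_is_two_pretransitive <|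
      isMultiplyPretransitive_two_of_isCycle_mem (isCycle_formPerm h.of_cons (by simp))
        hfix hyG hxG hxa
  have hthree : ((x * (y ^ 3 * x * (y ^ 3)⁻¹)) ^ 2).IsThreeCycle := by
    rw [formPerm_pow_three_conj_swap_mul_swap h]
    exact isThreeCycle_sq_swap_mul_swap_mul_swap_mul_swap (h.sublist (by simp))
  have hconj : y ^ 3 * x * (y ^ 3)⁻¹ ∈ Subgroup.closure {x, y} :=
    mul_mem (mul_mem (pow_mem hyG 3) hxG) (inv_mem (pow_mem hyG 3))
  exact alternatingGroup_le_of_isPreprimitive_of_isThreeCycle_mem hprim hthree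
    (pow_mem (mul_mem hxG hconj) 2)

lemma closure_swap_mul_swap_formPerm_le_alternatingGroup [Fintype α] (hab : a ≠ b) (hcd : c ≠ d)
    (h : (e :: l).Nodup) (hl : Even l.length) :
    Subgroup.closure {swap a b * swap c d, formPerm (e :: l)} ≤ alternatingGroup α := by
  rw [Subgroup.closure_le, Set.insert_subset_iff, Set.singleton_subset_iff]
  constructor
  · rw [SetLike.mem_coe, mem_alternatingGroup, Perm.sign_mul, sign_swap hab, sign_swap hcd,
      neg_mul_neg, one_mul]
  · rw [SetLike.mem_coe, mem_alternatingGroup, sign_formPerm_cons h, hl.neg_one_pow]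

end FormPerm

lemma finRange_eq_map_range_append_drop {n k : ℕ} [NeZero n] (hk : k ≤ n) :
    List.finRange n = (List.range k).map (Fin.ofNat n) ++ (List.finRange n).drop k := by
  have htake : (List.finRange n).take k = (List.range k).map (Fin.ofNat n) := by
    refine List.ext_getElem (by simpa using hk) fun i hi _ ↦ Fin.ext ?_
    have hin : i < n := by
      rw [List.length_take, List.length_finRange] at hi
      omega
    simp [Nat.mod_eq_of_lt hin]
  rw [← htake, List.take_append_drop]

/-- for even `n ≥ 8`, in `A_n` the elements `x₁ = (1,2)(3,4)` and
`y₁ = (2,3,4,…,n)` generate `A_n`, and their product `x₁y₁ = (1,3,5,6,…,n,2)`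
is an `(n−1)`-cycle.  Points `1,…,n` are modelled by `Fin n` (zero-based), cycles by
`List.formPerm`/`Equiv.swap`, and since Mathlib's permutation product applies the
right-hand factor first, the paper's product `x₁y₁` (apply `x₁` first) is `y₁ * x₁`. -/
theorem alternatingGroup_even_first_pair
    (n : ℕ) [NeZero n] (hn : 8 ≤ n) (heven : Even n)
    (x₁ y₁ : Equiv.Perm (Fin n))
    (hx₁ : x₁ = Equiv.swap (0 : Fin n) 1 * Equiv.swap 2 3)
    (hy₁ : y₁ = List.formPerm ((List.finRange n).drop 1)) :
    Subgroup.closure {x₁, y₁} = alternatingGroup (Fin n) ∧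
    y₁ * x₁ = List.formPerm ([(0 : Fin n), 2] ++ (List.finRange n).drop 4 ++ [1]) ∧
    (y₁ * x₁).IsCycle ∧ (y₁ * x₁).support.card = n - 1 := by
  obtain ⟨l, hl⟩ : ∃ l, List.finRange n = 0 :: 1 :: 2 :: 3 :: 4 :: 5 :: 6 :: l :=
    ⟨_, finRange_eq_map_range_append_drop (k := 7) (by omega)⟩
  have hnodup : (0 :: 1 :: 2 :: 3 :: 4 :: 5 :: 6 :: l).Nodup := hl ▸ List.nodup_finRange n
  have hmem (i : Fin n) : i ∈ 0 :: 1 :: 2 :: 3 :: 4 :: 5 :: 6 :: l := hl ▸ List.mem_finRange i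
  have hlen : n = l.length + 7 := by simpa using congrArg List.length hl
  have hnodup' : ((0 : Fin n) :: 2 :: (4 :: 5 :: 6 :: l) ++ [1]).Nodup := by grind
  rw [hl] at hy₁ ⊢
  simp only [List.drop_succ_cons, List.drop_zero] at hy₁ ⊢
  rw [hx₁, hy₁, formPerm_mul_swap_mul_swap hnodup]
  refine ⟨le_antisymm ?_ ?_, rfl, List.isCycle_formPerm hnodup' (by simp), ?_⟩
  · exact closure_swap_mul_swap_formPerm_le_alternatingGroup (by grind) (by grind) hnodup.of_cons
      (by grind)
  · exact alternatingGroup_le_closure_swap_mul_swap_formPerm hnodup hmem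
  · rw [card_support_formPerm hnodup' (by simp)]
    simp [hlen]
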